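/- (Sparse strong-convexity penalized rate.) Let L_n be a twice-differentiable convex function on ℝ^r such that ν'∇²L_n(ψ)ν ≥ λ_n‖ν‖₂² for all ν in the cone C(T;3) and all ψ, where T = supp(ψ*) with |T| = s. Suppose ψ̂ minimizes L_n(ψ) + κ‖ψ‖₁, ‖∇L_n(ψ*)‖_∞ ≤ κ/2, and ν = ψ̂ − ψ* ∈ C(T;3). Then ‖ν‖₂ ≤ 3√s κ/λ_n and ‖ν‖₁ ≤ 12 s κ/λ_n. -/

import Mathlib

open Finset

/-- Sparse strong-convexity penalized rate.  Let `L_n : ℝ^r → ℝ` be convex with gradient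
`g`, and λ_n-strongly convex along the cone `C(T;3) = {ν : ‖ν_{T^c}‖₁ ≤ 3‖ν_T‖₁}` (this
is the consequence of `ν'∇²L_n(ψ)ν ≥ λ_n‖ν‖₂²` for cone directions, expressed via the
second-order lower bound along such directions).  Let `T = supp(ψ*)` with `|T| = s`.
If `ψ̂` minimizes `L_n(ψ) + κ‖ψ‖₁`, `‖∇L_n(ψ*)‖_∞ ≤ κ/2`, and `ν = ψ̂ − ψ* ∈ C(T;3)`,
then `‖ν‖₂ ≤ 3√s·κ/λ_n` and `‖ν‖₁ ≤ 12·s·κ/λ_n`. -/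
theorem sparse_penalized_rate {r : ℕ} (s : ℕ)
    (L : (Fin r → ℝ) → ℝ) (g : (Fin r → ℝ) → Fin r → ℝ)
    (κ lam : ℝ) (hκ : 0 ≤ κ) (hlam : 0 < lam)
    (T : Finset (Fin r)) (hcard : T.card = s)
    (ψs ψh : Fin r → ℝ)
    (hsupp : ∀ i ∉ T, ψs i = 0)
    -- restricted strong convexity along cone directions:
    (hSC : ∀ ψ ν : Fin r → ℝ, (∑ i ∈ Tᶜ, |ν i| ≤ 3 * ∑ i ∈ T, |ν i|) →
      L ψ + ∑ i, g ψ i * ν i + (lam / 2) * ∑ i, (ν i) ^ 2 ≤ L (ψ + ν))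
    -- `ψ̂` minimizes the ℓ₁-penalized loss:
    (hmin : ∀ ψ, L ψh + κ * ∑ i, |ψh i| ≤ L ψ + κ * ∑ i, |ψ i|)
    -- sup-norm gradient bound `‖∇L_n(ψ*)‖_∞ ≤ κ/2`:
    (hgrad : ∀ i, |g ψs i| ≤ κ / 2)
    -- cone condition on `ν = ψ̂ − ψ*`:
    (hcone : ∑ i ∈ Tᶜ, |ψh i - ψs i| ≤ 3 * ∑ i ∈ T, |ψh i - ψs i|) :
    Real.sqrt (∑ i, (ψh i - ψs i) ^ 2) ≤ 3 * Real.sqrt s * κ / lam ∧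
      ∑ i, |ψh i - ψs i| ≤ 12 * s * κ / lam := by
  have h1 := hSC ψs (fun i => ψh i - ψs i) hcone
  have e1 : (ψs + fun i => ψh i - ψs i) = ψh := by
    funext i
    simp
  rw [e1] at h1
  have h2 := hmin ψs
  -- gradient term
  have h3 : -(κ / 2 * ∑ i, |ψh i - ψs i|) ≤ ∑ i, g ψs i * (ψh i - ψs i) := by
    rw [Finset.mul_sum, ← Finset.sum_neg_distrib]
    refine Finset.sum_le_sum fun i _ => ?_
    have ha : |g ψs i * (ψh i - ψs i)| ≤ κ / 2 * |ψh i - ψs i| := by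
      rw [abs_mul]
      exact mul_le_mul_of_nonneg_right (hgrad i) (abs_nonneg _)
    exact (abs_le.mp ha).1
  -- penalty term
  have h4 : ∑ i, |ψs i| - ∑ i, |ψh i| ≤
      ∑ i ∈ T, |ψh i - ψs i| - ∑ i ∈ Tᶜ, |ψh i - ψs i| := by
    rw [← Finset.sum_add_sum_compl T (fun i => |ψs i|),
      ← Finset.sum_add_sum_compl T (fun i => |ψh i|)]
    have hT : ∑ i ∈ T, |ψs i| ≤ ∑ i ∈ T, |ψh i - ψs i| + ∑ i ∈ T, |ψh i| := by
      rw [← Finset.sum_add_distrib]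
      refine Finset.sum_le_sum fun i _ => ?_
      have := abs_sub_abs_le_abs_sub (ψs i) (ψh i)
      rw [abs_sub_comm] at this
      linarith
    have hc1 : ∑ i ∈ Tᶜ, |ψs i| = 0 :=
      Finset.sum_eq_zero fun i hi => by simp [hsupp i (Finset.mem_compl.mp hi)]
    have hc2 : ∑ i ∈ Tᶜ, |ψh i - ψs i| = ∑ i ∈ Tᶜ, |ψh i| :=
      Finset.sum_congr rfl fun i hi => by simp [hsupp i (Finset.mem_compl.mp hi)]
    linarith
  have h5 := Finset.sum_add_sum_compl T (fun i => |ψh i - ψs i|)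
  have hB : 0 ≤ ∑ i ∈ Tᶜ, |ψh i - ψs i| := Finset.sum_nonneg fun i _ => abs_nonneg _
  -- Cauchy-Schwarz
  have h6 : (∑ i ∈ T, |ψh i - ψs i|) ^ 2 ≤ s * ∑ i, (ψh i - ψs i) ^ 2 := by
    have hcs := sq_sum_le_card_mul_sum_sq (s := T) (f := fun i => |ψh i - ψs i|)
    simp only [sq_abs] at hcs
    rw [hcard] at hcs
    refine hcs.trans (mul_le_mul_of_nonneg_left ?_ (Nat.cast_nonneg s))
    exact Finset.sum_le_sum_of_subset_of_nonneg (Finset.subset_univ T)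
      fun i _ _ => sq_nonneg _
  have hQ : 0 ≤ ∑ i, (ψh i - ψs i) ^ 2 := Finset.sum_nonneg fun i _ => sq_nonneg _
  generalize ∑ i, (ψh i - ψs i) ^ 2 = Q at *
  generalize ∑ i, |ψh i - ψs i| = N at *
  generalize ∑ i ∈ T, |ψh i - ψs i| = A at *
  generalize ∑ i ∈ Tᶜ, |ψh i - ψs i| = B at *
  have h7 : A ≤ √s * √Q := by
    rw [← Real.sqrt_mul (Nat.cast_nonneg s)]
    exact Real.le_sqrt_of_sq_le h6
  have h8 : lam * Q ≤ 3 * κ * A := by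
    have := mul_le_mul_of_nonneg_left h4 hκ
    have := mul_nonneg hκ hB
    subst h5
    nlinarith
  have hs0 := Real.sqrt_nonneg (s : ℝ)
  have hq0 := Real.sqrt_nonneg Q
  have hs2 := Real.mul_self_sqrt (Nat.cast_nonneg (α := ℝ) s)
  have hq2 := Real.mul_self_sqrt hQ
  have h9 : √Q * lam ≤ 3 * √s * κ := by
    rcases hq0.eq_or_lt with h | h
    · rw [← h, zero_mul]
      positivity
    · refine le_of_mul_le_mul_right ?_ h
      have h10 := mul_le_mul_of_nonneg_left h7 (by positivity : 0 ≤ 3 * κ)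
      calc √Q * lam * √Q = lam * (√Q * √Q) := by ring
        _ = lam * Q := by rw [hq2]
        _ ≤ 3 * κ * (√s * √Q) := h8.trans h10
        _ = 3 * √s * κ * √Q := by ring
  refine ⟨(le_div_iff₀ hlam).mpr h9, (le_div_iff₀ hlam).mpr ?_⟩
  have hN : N ≤ 4 * (√s * √Q) := by linarith
  calc N * lam ≤ 4 * (√s * √Q) * lam := mul_le_mul_of_nonneg_right hN hlam.le
    _ = 4 * √s * (√Q * lam) := by ring
    _ ≤ 4 * √s * (3 * √s * κ) := mul_le_mul_of_nonneg_left h9 (by positivity)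
    _ = 12 * (√s * √s) * κ := by ring
    _ = 12 * s * κ := by rw [hs2]
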